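/- Let K : ℝ^d → ℝ be twice continuously differentiable with compact support, and let A be the d×d matrix with entries A_{ij} = ∫_{ℝ^d} (∂K(u)/∂u_i)(∂K(u)/∂u_j) du. Then, as v → 0 in ℝ^d, ∫_{ℝ^d} K(u) K(u+v) du = ∫_{ℝ^d} K(u)² du − (1/2) vᵀ A v + o(‖v‖²). -/

import Mathlib

/-!
Translation invariance of Lebesgue measure gives
`∫ K(u) K(u+v) du = ∫ K² - ½ ∫ (K(u+v) - K(u))² du`, while `vᵀ A v = ∫ (DK(u) v)² du`. So the error
term is `-½ ∫ ((K(u+v) - K(u))² - (DK(u) v)²) du`. The derivative `DK` is continuous with compact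
support, hence bounded and uniformly continuous, so `K(u+v) - K(u) = DK(u) v + o(‖v‖)` uniformly in
`u` (`uniform_first_order`). Both factors of the product
`(K(u+v) - K(u) - DK(u) v) * (K(u+v) - K(u) + DK(u) v)` are then controlled, the integrand is
uniformly `o(‖v‖²)`, and for `‖v‖ ≤ 1` it vanishes outside the closed 1-neighbourhood of the support
of `K`, which has finite measure.
-/

open MeasureTheory Filter Asymptotics
open scoped Topology

/-- The first-order Taylor expansion of a compactly supported `C¹` function holds uniformly in the
base point, because its derivative is uniformly continuous. -/
lemma uniform_first_order {d : ℕ} {K : EuclideanSpace ℝ (Fin d) → ℝ}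
    (hK : ContDiff ℝ 1 K) (hsupp : HasCompactSupport K) {ε : ℝ} (hε : 0 < ε) :
    ∃ δ > 0, ∀ u v : EuclideanSpace ℝ (Fin d), ‖v‖ < δ →
      |K (u + v) - K u - fderiv ℝ K u v| ≤ ε * ‖v‖ := by
  have hcont : Continuous (fderiv ℝ K) := hK.continuous_fderiv (by norm_num)
  have huc : UniformContinuous (fderiv ℝ K) :=
    (hsupp.fderiv ℝ).uniformContinuous_of_continuous hcont
  obtain ⟨δ, hδ, h⟩ := Metric.uniformContinuous_iff.1 huc ε hε
  refine ⟨δ, hδ, fun u v hv => ?_⟩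
  have := (convex_ball u δ).norm_image_sub_le_of_norm_hasFDerivWithin_le' (f := K)
    (f' := fderiv ℝ K) (φ := fderiv ℝ K u) (C := ε) (x := u) (y := u + v)
    (fun x _ => ((hK.differentiable (by norm_num)) x).hasFDerivAt.hasFDerivWithinAt)
    (fun x hx => by
      rw [← dist_eq_norm]
      exact (h (Metric.mem_ball.1 hx)).le)
    (Metric.mem_ball_self hδ) (by simpa [Metric.mem_ball, dist_eq_norm] using hv)
  simpa using this

lemma integrable_fderiv_mul {d : ℕ} {K : EuclideanSpace ℝ (Fin d) → ℝ}
    (hK : ContDiff ℝ 1 K) (hsupp : HasCompactSupport K) (v w : EuclideanSpace ℝ (Fin d)) :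
    Integrable (fun u => fderiv ℝ K u v * fderiv ℝ K u w) := by
  have hcont : Continuous (fderiv ℝ K) := hK.continuous_fderiv (by norm_num)
  refine Continuous.integrable_of_hasCompactSupport (by fun_prop) ?_
  exact (hsupp.fderiv_apply ℝ v).mul_right

lemma quadForm_eq_integral {d : ℕ} {K : EuclideanSpace ℝ (Fin d) → ℝ}
    (hK : ContDiff ℝ 1 K) (hsupp : HasCompactSupport K)
    (A : Matrix (Fin d) (Fin d) ℝ)
    (hA : ∀ i j, A i j = ∫ u : EuclideanSpace ℝ (Fin d),
      fderiv ℝ K u (EuclideanSpace.single i 1) * fderiv ℝ K u (EuclideanSpace.single j 1))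
    (v : EuclideanSpace ℝ (Fin d)) :
    ∑ i, ∑ j, v i * A i j * v j = ∫ u, (fderiv ℝ K u v) ^ 2 := by
  have hv : v = ∑ i, v i • EuclideanSpace.single i (1 : ℝ) := by
    ext j
    simp [Pi.single_apply]
  have hL : ∀ u, (fderiv ℝ K u v) ^ 2 = ∑ i, ∑ j, v i * (fderiv ℝ K u (EuclideanSpace.single i 1) *
      fderiv ℝ K u (EuclideanSpace.single j 1)) * v j := by
    intro u
    have h1 : fderiv ℝ K u v = ∑ i, v i * fderiv ℝ K u (EuclideanSpace.single i 1) := by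
      conv_lhs => rw [hv]
      simp
    rw [h1, sq, Finset.sum_mul_sum]
    refine Finset.sum_congr rfl fun i _ => Finset.sum_congr rfl fun j _ => ?_
    ring
  have hint : ∀ i j, Integrable (fun u => v i * (fderiv ℝ K u (EuclideanSpace.single i 1) *
      fderiv ℝ K u (EuclideanSpace.single j 1)) * v j) := fun i j =>
    ((integrable_fderiv_mul hK hsupp _ _).const_mul _).mul_const _
  simp_rw [hL]
  rw [integral_finsetSum _ fun i _ => integrable_finsetSum _ fun j _ => hint i j]
  refine Finset.sum_congr rfl fun i _ => ?_
  rw [integral_finsetSum _ fun j _ => hint i j]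
  refine Finset.sum_congr rfl fun j _ => ?_
  rw [integral_mul_const, integral_const_mul, hA]

/-- Expanding the square and using translation invariance of the integral of `K²`. -/
lemma autocorrelation_eq {d : ℕ} {K : EuclideanSpace ℝ (Fin d) → ℝ}
    (hK : Continuous K) (hsupp : HasCompactSupport K) (v : EuclideanSpace ℝ (Fin d)) :
    Integrable (fun u => (K (u + v) - K u) ^ 2) ∧
    ∫ u, K u * K (u + v) = (∫ u, K u ^ 2) - (1 / 2) * ∫ u, (K (u + v) - K u) ^ 2 := by
  have h0 : Integrable (fun u => K u ^ 2) := by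
    refine Continuous.integrable_of_hasCompactSupport (by fun_prop) ?_
    simp_rw [sq]
    exact hsupp.mul_right
  have h1 : Integrable (fun u => K (u + v) ^ 2) := h0.comp_add_right v
  have h2 : Integrable (fun u => K u * K (u + v)) :=
    Continuous.integrable_of_hasCompactSupport (by fun_prop) hsupp.mul_right
  have he : ∀ u, (K (u + v) - K u) ^ 2 = K (u + v) ^ 2 + K u ^ 2 - 2 * (K u * K (u + v)) :=
    fun u => by ring
  have h3 : Integrable (fun u => K (u + v) ^ 2 + K u ^ 2) := h1.add h0
  simp_rw [he]
  refine ⟨h3.sub (h2.const_mul 2), ?_⟩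
  rw [integral_sub h3 (h2.const_mul 2), integral_add h1 h0, integral_const_mul,
    integral_add_right_eq_self (fun u => K u ^ 2) v]
  ring

/-- For a twice continuously differentiable, compactly supported kernel
`K : ℝ^d → ℝ` and the matrix `A` with entries `A_{ij} = ∫ ∂_i K(u) ∂_j K(u) du`, one has, as
`v → 0`, `∫ K(u)K(u+v) du = ∫ K(u)² du - (1/2) vᵀ A v + o(‖v‖²)`. -/
theorem statement15 {d : ℕ} (K : EuclideanSpace ℝ (Fin d) → ℝ)
    (hK : ContDiff ℝ 2 K) (hsupp : HasCompactSupport K)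
    (A : Matrix (Fin d) (Fin d) ℝ)
    (hA : ∀ i j, A i j = ∫ u : EuclideanSpace ℝ (Fin d),
      fderiv ℝ K u (EuclideanSpace.single i 1) * fderiv ℝ K u (EuclideanSpace.single j 1)) :
    (fun v : EuclideanSpace ℝ (Fin d) =>
        (∫ u : EuclideanSpace ℝ (Fin d), K u * K (u + v)) -
          ((∫ u : EuclideanSpace ℝ (Fin d), K u ^ 2) -
            (1 / 2) * ∑ i, ∑ j, v i * A i j * v j))
      =o[𝓝 0] fun v => ‖v‖ ^ 2 := by
  have hK1 : ContDiff ℝ 1 K := hK.of_le (by norm_num)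
  obtain ⟨M, hM⟩ := (hsupp.fderiv ℝ).exists_bound_of_continuous
    (hK1.continuous_fderiv (by norm_num))
  have hM0 : 0 ≤ M := (norm_nonneg _).trans (hM 0)
  set S := Metric.cthickening 1 (tsupport K) with hS
  have hSc : IsCompact S := hsupp.isCompact.cthickening
  set V := volume.real S with hV
  have hV0 : 0 ≤ V := measureReal_nonneg
  rw [isLittleO_iff]
  intro c hc
  set ε := min 1 (c / ((2 * M + 1) * (V + 1))) with hε
  have hε0 : 0 < ε := lt_min one_pos (by positivity)
  have hε1 : ε ≤ 1 := min_le_left _ _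
  have hεc : ε * ((2 * M + 1) * (V + 1)) ≤ c :=
    (le_div_iff₀ (by positivity)).1 (min_le_right _ _)
  obtain ⟨δ, hδ, happ⟩ := uniform_first_order hK1 hsupp hε0
  filter_upwards [Metric.ball_mem_nhds 0 (lt_min hδ one_pos)] with v hv
  rw [mem_ball_zero_iff, lt_min_iff] at hv
  obtain ⟨hD, heq⟩ := autocorrelation_eq hK.continuous hsupp v
  have hL : Integrable (fun u => (fderiv ℝ K u v) ^ 2) := by
    simpa [sq] using integrable_fderiv_mul hK1 hsupp v v
  have key : |∫ u, ((K (u + v) - K u) ^ 2 - (fderiv ℝ K u v) ^ 2)|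
      ≤ (ε * (2 * M + 1) * ‖v‖ ^ 2) * V := by
    have hzero : ∀ u, u ∉ S → (K (u + v) - K u) ^ 2 - (fderiv ℝ K u v) ^ 2 = 0 := by
      intro u hu
      have hu0 : u ∉ tsupport K := fun h => hu (Metric.self_subset_cthickening _ h)
      have huv : u + v ∉ tsupport K := fun h =>
        hu (Metric.mem_cthickening_of_dist_le u (u + v) 1 _ h (by simpa using hv.2.le))
      rw [image_eq_zero_of_notMem_tsupport hu0, image_eq_zero_of_notMem_tsupport huv,
        fderiv_of_notMem_tsupport ℝ hu0]
      simp
    rw [← setIntegral_eq_integral_of_forall_compl_eq_zero hzero, ← Real.norm_eq_abs]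
    refine norm_setIntegral_le_of_norm_le_const hSc.measure_lt_top fun u _ => ?_
    have h1 := happ u v hv.1
    have h2 : |fderiv ℝ K u v| ≤ M * ‖v‖ := (fderiv ℝ K u).le_of_opNorm_le (hM u) v
    have h3 : |K (u + v) - K u + fderiv ℝ K u v| ≤ (2 * M + 1) * ‖v‖ := by
      have : ε * ‖v‖ ≤ 1 * ‖v‖ := by gcongr
      rw [abs_le] at *
      constructor <;> linarith [h1.1, h1.2, h2.1, h2.2]
    rw [Real.norm_eq_abs]
    calc |(K (u + v) - K u) ^ 2 - (fderiv ℝ K u v) ^ 2|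
        = |K (u + v) - K u - fderiv ℝ K u v| * |K (u + v) - K u + fderiv ℝ K u v| := by
          rw [← abs_mul]
          congr 1
          ring
      _ ≤ (ε * ‖v‖) * ((2 * M + 1) * ‖v‖) := by gcongr
      _ = ε * (2 * M + 1) * ‖v‖ ^ 2 := by ring
  rw [integral_sub hD hL] at key
  rw [quadForm_eq_integral hK1 hsupp A hA v, heq, Real.norm_eq_abs, Real.norm_eq_abs,
    abs_of_nonneg (sq_nonneg ‖v‖)]
  have hfin : (ε * (2 * M + 1) * ‖v‖ ^ 2) * V ≤ c * ‖v‖ ^ 2 := by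
    calc (ε * (2 * M + 1) * ‖v‖ ^ 2) * V ≤ (ε * (2 * M + 1) * ‖v‖ ^ 2) * (V + 1) := by
          gcongr
          linarith
      _ = (ε * ((2 * M + 1) * (V + 1))) * ‖v‖ ^ 2 := by ring
      _ ≤ c * ‖v‖ ^ 2 := by gcongr
  have hpos : 0 ≤ c * ‖v‖ ^ 2 := by positivity
  have key' := abs_le.1 (key.trans hfin)
  rw [abs_le]
  constructor <;> linarith [key'.1, key'.2]
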